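/- arXiv:math/0201023 — 3 statements merged into one kernel-verified Lean document; each statement's English description precedes it below -/
import Mathlib

section
/- Let E be a real Hilbert space and let A ⊆ E be unbounded. Then τ(A) = sin φ(A) and μ(A) ≤ cos φ(A). Moreover, if E = ℝⁿ is finite-dimensional, then μ(A) = cos φ(A) = √(1 − τ(A)²). -/
open Filter Metric Bornology RealInnerProductSpace

/-- `f` is an `ε`-nearisometry on `A`: `||f x - f y| - |x - y|| ≤ ε` for all `x, y ∈ A`. -/
def IsNearisometryOn {E F : Type*} [NormedAddCommGroup E] [NormedAddCommGroup F]
    (f : E → F) (A : Set E) (ε : ℝ) : Prop :=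
  ∀ x ∈ A, ∀ y ∈ A, |‖f x - f y‖ - ‖x - y‖| ≤ ε

/-- `u` is a cluster direction of `A`: there is a sequence `(x_j)` in `A` with
`‖x_j‖ → ∞` and `x_j / ‖x_j‖ → u`. -/
def IsClusterDirection {E : Type*} [NormedAddCommGroup E] [NormedSpace ℝ E]
    (A : Set E) (u : E) : Prop :=
  ∃ x : ℕ → E, (∀ j, x j ∈ A) ∧ Tendsto (fun j => ‖x j‖) atTop atTop ∧
    Tendsto (fun j => ‖x j‖⁻¹ • x j) atTop (nhds u)

/-- `μ(A) = μ₁(cd A)`, where `μ₁(X) = inf_{|e|=1} sup {|u ⬝ e| : u ∈ X}` (with `sup ∅ = 0`,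
as is the convention for `Real.sSup`). -/
noncomputable def muDir {E : Type*} [NormedAddCommGroup E] [InnerProductSpace ℝ E]
    (A : Set E) : ℝ :=
  sInf {s | ∃ e : E, ‖e‖ = 1 ∧
    s = sSup {t | ∃ u, IsClusterDirection A u ∧ t = abs ⟪u, e⟫}}

/-- The open double cone `D(e, α) = {x : |x ⬝ e| > |x| cos α}`. -/
def doubleCone {E : Type*} [NormedAddCommGroup E] [InnerProductSpace ℝ E]
    (e : E) (α : ℝ) : Set E :=
  {x | ‖x‖ * Real.cos α < abs ⟪x, e⟫}

/-- `φ(A) = sup {α ∈ [0, π/2] : A ∩ D(e, α) is bounded for some unit vector e}`. -/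
noncomputable def phiDir {E : Type*} [NormedAddCommGroup E] [InnerProductSpace ℝ E]
    (A : Set E) : ℝ :=
  sSup {α | α ∈ Set.Icc 0 (Real.pi / 2) ∧
    ∃ e : E, ‖e‖ = 1 ∧ Bornology.IsBounded (A ∩ doubleCone e α)}

/-- `τ(A) = sup_{|e|=1} liminf_{|t|→∞} dist(t e, A)/|t|`. -/
noncomputable def tauDir {E : Type*} [NormedAddCommGroup E] [NormedSpace ℝ E]
    (A : Set E) : ℝ :=
  sSup {s | ∃ e : E, ‖e‖ = 1 ∧
    s = Filter.liminf (fun t : ℝ => Metric.infDist (t • e) A / |t|) (Filter.cocompact ℝ)}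

/-! Fix a unit vector `e`. A point outside `D(e, α)` lies at distance at least `|t| sin α` from
every `t e`, while a point `x ∈ D(e, β)` lies at distance less than `|t| sin β` from the point
`t e` for which `x ⟂ t e - x`. So the lower limit of `dist(t e, A) / |t|` is at least `sin α` when
`A ∩ D(e, α)` is bounded, and is at most `sin β` when `A ∩ D(e, β)` is unbounded. Likewise a
cluster direction of `A` makes an angle at least `α` with the axis of `D(e, α)` when `A ∩ D(e, α)`
is bounded; if closed balls are compact, an unbounded `A ∩ D(e, β)` has a cluster direction within
the angle `β` of that axis. Optimizing over `e` gives the result, since `sin` and `cos` are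
continuous and monotone on `[0, π/2]`. -/

section Definitions

/-- The contribution `liminf_{|t| → ∞} dist(t e, A) / |t|` of a single direction `e` to `τ(A)`. -/
noncomputable def tauAlong {E : Type*} [NormedAddCommGroup E] [NormedSpace ℝ E]
    (A : Set E) (e : E) : ℝ :=
  liminf (fun t : ℝ => infDist (t • e) A / |t|) (cocompact ℝ)

variable {E : Type*} [NormedAddCommGroup E] [InnerProductSpace ℝ E]

/-- The contribution `sup {|u ⬝ e| : u ∈ cd A}` of a single direction `e` to `μ(A)`; it is `0` if
`cd A` is empty. -/
noncomputable def muAlong (A : Set E) (e : E) : ℝ :=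
  sSup {t | ∃ u, IsClusterDirection A u ∧ t = abs ⟪u, e⟫}

/-- The angles `α ∈ [0, π/2]` over which the supremum `φ(A)` is taken: those for which `A` meets
some double cone of central angle `α` in a bounded set. -/
def boundedConeAngles (A : Set E) : Set ℝ :=
  {α | α ∈ Set.Icc 0 (Real.pi / 2) ∧ ∃ e : E, ‖e‖ = 1 ∧ IsBounded (A ∩ doubleCone e α)}

end Definitions

section ClusterDirection

variable {E : Type*} [NormedAddCommGroup E] [NormedSpace ℝ E] {A B : Set E} {u : E}

lemma IsClusterDirection.mono (hu : IsClusterDirection A u) (hAB : A ⊆ B) :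
    IsClusterDirection B u :=
  let ⟨x, hxA, hx⟩ := hu
  ⟨x, fun j => hAB (hxA j), hx⟩

lemma IsClusterDirection.norm_eq_one (hu : IsClusterDirection A u) : ‖u‖ = 1 := by
  obtain ⟨x, -, hx, hxu⟩ := hu
  refine tendsto_nhds_unique hxu.norm (tendsto_const_nhds.congr' ?_)
  filter_upwards [hx.eventually_gt_atTop 0] with j hj
  exact (norm_smul_inv_norm (𝕜 := ℝ) (norm_pos_iff.1 hj)).symm

lemma exists_isClusterDirection_of_not_isBounded [ProperSpace E] (hA : ¬ IsBounded A) :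
    ∃ u, IsClusterDirection A u := by
  have exists_norm_gt (n : ℕ) : ∃ x ∈ A, (n : ℝ) < ‖x‖ := by
    by_contra! h
    exact hA (isBounded_iff_forall_norm_le.2 ⟨n, h⟩)
  choose x hxA hx using exists_norm_gt
  have normalized_mem (n : ℕ) : ‖x n‖⁻¹ • x n ∈ sphere (0 : E) 1 :=
    mem_sphere_zero_iff_norm.2 <|
      norm_smul_inv_norm (𝕜 := ℝ) (norm_pos_iff.1 ((Nat.cast_nonneg n).trans_lt (hx n)))
  obtain ⟨u, -, f, hf, hu⟩ := (isCompact_sphere (0 : E) 1).tendsto_subseq normalized_mem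
  have norm_tendsto : Tendsto (fun n => ‖x n‖) atTop atTop :=
    tendsto_atTop_mono (fun n => (hx n).le) tendsto_natCast_atTop_atTop
  exact ⟨u, x ∘ f, fun j => hxA (f j), norm_tendsto.comp hf.tendsto_atTop, hu⟩

end ClusterDirection

section DoubleCone

variable {E : Type*} [NormedAddCommGroup E] [InnerProductSpace ℝ E] {A : Set E} {e u x : E}
  {α : ℝ}

lemma notMem_doubleCone_iff : x ∉ doubleCone e α ↔ |⟪x, e⟫| ≤ ‖x‖ * Real.cos α := by
  simp only [doubleCone, Set.mem_ofPred_eq, not_lt]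

lemma mem_doubleCone_iff_cos_lt (hx : x ≠ 0) :
    x ∈ doubleCone e α ↔ Real.cos α < |⟪‖x‖⁻¹ • x, e⟫| := by
  have hx' : 0 < ‖x‖ := norm_pos_iff.2 hx
  rw [real_inner_smul_left, abs_mul, abs_inv, abs_norm, lt_inv_mul_iff₀ hx']
  rfl

lemma doubleCone_zero (he : ‖e‖ = 1) : doubleCone e 0 = ∅ := by
  refine Set.eq_empty_iff_forall_notMem.2 fun x => notMem_doubleCone_iff.2 ?_
  simpa only [Real.cos_zero, he] using abs_real_inner_le_norm x e

lemma norm_smul_sub_sq (he : ‖e‖ = 1) (t : ℝ) (x : E) :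
    ‖t • e - x‖ ^ 2 = t ^ 2 - 2 * (t * ⟪x, e⟫) + ‖x‖ ^ 2 := by
  rw [norm_sub_sq_real, norm_smul, he, mul_one, Real.norm_eq_abs, sq_abs, real_inner_smul_left,
    real_inner_comm]

lemma abs_mul_sin_le_norm_smul_sub (he : ‖e‖ = 1) (hx : x ∉ doubleCone e α) (t : ℝ) :
    |t| * Real.sin α ≤ ‖t • e - x‖ := by
  have inner_le : t * ⟪x, e⟫ ≤ |t| * (‖x‖ * Real.cos α) :=
    calc t * ⟪x, e⟫ ≤ |t| * |⟪x, e⟫| := (le_abs_self _).trans_eq (abs_mul _ _)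
      _ ≤ |t| * (‖x‖ * Real.cos α) := by gcongr; exact notMem_doubleCone_iff.1 hx
  refine le_of_sq_le_sq ?_ (norm_nonneg _)
  calc (|t| * Real.sin α) ^ 2
      = |t| ^ 2 - (|t| * Real.cos α) ^ 2 := by rw [mul_pow, Real.sin_sq]; ring
    _ ≤ |t| ^ 2 - 2 * (|t| * (‖x‖ * Real.cos α)) + ‖x‖ ^ 2 := by
        linarith [sq_nonneg (‖x‖ - |t| * Real.cos α)]
    _ ≤ t ^ 2 - 2 * (t * ⟪x, e⟫) + ‖x‖ ^ 2 := by rw [sq_abs]; linarith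
    _ = ‖t • e - x‖ ^ 2 := (norm_smul_sub_sq he t x).symm

lemma exists_norm_smul_sub_lt_of_mem_doubleCone (he : ‖e‖ = 1)
    (hα : α ∈ Set.Icc 0 (Real.pi / 2)) (hx : x ∈ doubleCone e α) :
    ∃ t : ℝ, ‖x‖ ≤ |t| ∧ ‖t • e - x‖ < |t| * Real.sin α := by
  have cos_nonneg : 0 ≤ Real.cos α :=
    Real.cos_nonneg_of_mem_Icc ⟨by linarith [hα.1, Real.pi_pos], hα.2⟩
  have sin_nonneg : 0 ≤ Real.sin α :=
    Real.sin_nonneg_of_nonneg_of_le_pi hα.1 (by linarith [hα.2, Real.pi_pos])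
  have inner_pos : 0 < |⟪x, e⟫| := lt_of_le_of_lt (by positivity) hx
  have inner_le : |⟪x, e⟫| ≤ ‖x‖ := by simpa only [he, mul_one] using abs_real_inner_le_norm x e
  have norm_pos : 0 < ‖x‖ := inner_pos.trans_le inner_le
  -- The choice of `t` that makes `x` orthogonal to `t • e - x`.
  obtain ⟨t, ht⟩ : ∃ t : ℝ, t * ⟪x, e⟫ = ‖x‖ ^ 2 :=
    ⟨‖x‖ ^ 2 / ⟪x, e⟫, div_mul_cancel₀ _ (abs_pos.1 inner_pos)⟩
  have abs_mul_inner : |t| * |⟪x, e⟫| = ‖x‖ * ‖x‖ := by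
    rw [← abs_mul, ht, abs_of_nonneg (sq_nonneg _), sq]
  have norm_le : ‖x‖ ≤ |t| := by
    refine le_of_mul_le_mul_right ?_ norm_pos
    calc ‖x‖ * ‖x‖ = |t| * |⟪x, e⟫| := abs_mul_inner.symm
      _ ≤ |t| * ‖x‖ := by gcongr
  have mul_cos_lt : |t| * Real.cos α < ‖x‖ := by
    refine lt_of_mul_lt_mul_right ?_ norm_pos.le
    calc |t| * Real.cos α * ‖x‖ = |t| * (‖x‖ * Real.cos α) := by ring
      _ < |t| * |⟪x, e⟫| := mul_lt_mul_of_pos_left hx (norm_pos.trans_le norm_le)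
      _ = ‖x‖ * ‖x‖ := abs_mul_inner
  refine ⟨t, norm_le, lt_of_pow_lt_pow_left₀ 2 (by positivity) ?_⟩
  calc ‖t • e - x‖ ^ 2 = |t| ^ 2 - ‖x‖ ^ 2 := by rw [norm_smul_sub_sq he, ht, sq_abs]; ring
    _ < |t| ^ 2 - (|t| * Real.cos α) ^ 2 := by gcongr
    _ = (|t| * Real.sin α) ^ 2 := by rw [mul_pow, mul_pow, Real.sin_sq]; ring

lemma IsClusterDirection.cos_le_abs_inner (hu : IsClusterDirection (doubleCone e α) u) :
    Real.cos α ≤ |⟪u, e⟫| := by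
  obtain ⟨x, hxD, hx, hxu⟩ := hu
  refine ge_of_tendsto (hxu.inner tendsto_const_nhds).abs ?_
  filter_upwards [hx.eventually_gt_atTop 0] with j hj
  exact ((mem_doubleCone_iff_cos_lt (norm_pos_iff.1 hj)).1 (hxD j)).le

lemma IsClusterDirection.abs_inner_le_cos (hu : IsClusterDirection A u)
    (hA : IsBounded (A ∩ doubleCone e α)) : |⟪u, e⟫| ≤ Real.cos α := by
  obtain ⟨R, hR⟩ := hA.exists_norm_le
  obtain ⟨x, hxA, hx, hxu⟩ := hu
  refine le_of_tendsto (hxu.inner tendsto_const_nhds).abs ?_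
  filter_upwards [hx.eventually_gt_atTop 0, hx.eventually_gt_atTop R] with j hj hRj
  refine not_lt.1 fun hlt => hRj.not_ge (hR _ ⟨hxA j, ?_⟩)
  exact (mem_doubleCone_iff_cos_lt (norm_pos_iff.1 hj)).2 hlt

end DoubleCone

section TauAlong

lemma tendsto_const_add_const_div_abs_cocompact (a b : ℝ) :
    Tendsto (fun t : ℝ => a + b / |t|) (cocompact ℝ) (nhds a) := by
  simpa only [add_zero, Real.norm_eq_abs] using
    ((tendsto_norm_cocompact_atTop (E := ℝ)).const_div_atTop b).const_add a

section NormedSpace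

variable {E : Type*} [NormedAddCommGroup E] [NormedSpace ℝ E] {A : Set E} {e : E}

lemma isBoundedUnder_ge_infDist_smul_div_abs (A : Set E) (e : E) :
    IsBoundedUnder (· ≥ ·) (cocompact ℝ) (fun t : ℝ => infDist (t • e) A / |t|) :=
  isBoundedUnder_of ⟨0, fun t => div_nonneg infDist_nonneg (abs_nonneg t)⟩

lemma eventually_infDist_smul_div_abs_le (he : ‖e‖ = 1) {a : E} (ha : a ∈ A) :
    ∀ᶠ t : ℝ in cocompact ℝ, infDist (t • e) A / |t| ≤ 1 + ‖a‖ / |t| := by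
  filter_upwards [tendsto_norm_cocompact_atTop.eventually_gt_atTop 0] with t ht
  rw [Real.norm_eq_abs] at ht
  rw [div_le_iff₀ ht, add_mul, one_mul, div_mul_cancel₀ _ ht.ne']
  calc infDist (t • e) A ≤ ‖t • e - a‖ := dist_eq_norm (t • e) a ▸ infDist_le_dist_of_mem ha
    _ ≤ ‖t • e‖ + ‖a‖ := norm_sub_le _ _
    _ = |t| + ‖a‖ := by rw [norm_smul, he, mul_one, Real.norm_eq_abs]

lemma isCoboundedUnder_ge_infDist_smul_div_abs (hA : A.Nonempty) (he : ‖e‖ = 1) :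
    IsCoboundedUnder (· ≥ ·) (cocompact ℝ) (fun t : ℝ => infDist (t • e) A / |t|) :=
  let ⟨a, ha⟩ := hA
  ((tendsto_const_add_const_div_abs_cocompact 1 ‖a‖).isBoundedUnder_le.mono_le
    (eventually_infDist_smul_div_abs_le he ha)).isCoboundedUnder_ge

lemma tauAlong_le_one (hA : A.Nonempty) (he : ‖e‖ = 1) : tauAlong A e ≤ 1 := by
  obtain ⟨a, ha⟩ := hA
  have hlim := tendsto_const_add_const_div_abs_cocompact 1 ‖a‖
  exact (liminf_le_liminf (eventually_infDist_smul_div_abs_le he ha)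
    (isBoundedUnder_ge_infDist_smul_div_abs A e)
    hlim.isBoundedUnder_le.isCoboundedUnder_ge).trans_eq hlim.liminf_eq

end NormedSpace

variable {E : Type*} [NormedAddCommGroup E] [InnerProductSpace ℝ E] {A : Set E} {e : E} {α : ℝ}

lemma sin_le_tauAlong (hA : A.Nonempty) (he : ‖e‖ = 1)
    (hb : IsBounded (A ∩ doubleCone e α)) : Real.sin α ≤ tauAlong A e := by
  obtain ⟨R, hR₀, hR⟩ := hb.exists_pos_norm_le
  have le_norm_sub (t : ℝ) (x : E) (hx : x ∈ A) : |t| * Real.sin α - R ≤ ‖t • e - x‖ := by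
    by_cases hxD : x ∈ doubleCone e α
    · calc |t| * Real.sin α - R ≤ |t| * 1 - ‖x‖ := by
            gcongr
            exacts [Real.sin_le_one α, hR x ⟨hx, hxD⟩]
        _ = ‖t • e‖ - ‖x‖ := by rw [norm_smul, he, Real.norm_eq_abs]
        _ ≤ ‖t • e - x‖ := norm_sub_norm_le _ _
    · linarith [abs_mul_sin_le_norm_smul_sub he hxD t]
  have hlim := tendsto_const_add_const_div_abs_cocompact (Real.sin α) (-R)
  rw [← hlim.liminf_eq]
  refine liminf_le_liminf ?_ hlim.isBoundedUnder_ge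
    (isCoboundedUnder_ge_infDist_smul_div_abs hA he)
  filter_upwards [tendsto_norm_cocompact_atTop.eventually_gt_atTop 0] with t ht
  rw [Real.norm_eq_abs] at ht
  rw [le_div_iff₀ ht, add_mul, div_mul_cancel₀ _ ht.ne', mul_comm, ← sub_eq_add_neg, le_infDist hA]
  exact fun x hx => dist_eq_norm (t • e) x ▸ le_norm_sub t x hx

lemma isBounded_inter_doubleCone_of_sin_lt_tauAlong (he : ‖e‖ = 1)
    (hα : α ∈ Set.Icc 0 (Real.pi / 2)) (h : Real.sin α < tauAlong A e) :
    IsBounded (A ∩ doubleCone e α) := by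
  have hev := eventually_lt_of_lt_liminf h (isBoundedUnder_ge_infDist_smul_div_abs A e)
  rw [← cobounded_eq_cocompact, hasBasis_cobounded_norm.eventually_iff] at hev
  obtain ⟨T, -, hT⟩ := hev
  refine isBounded_iff_forall_norm_le.2 ⟨T, fun x ⟨hxA, hxD⟩ => ?_⟩
  obtain ⟨t, hxt, ht⟩ := exists_norm_smul_sub_lt_of_mem_doubleCone he hα hxD
  by_contra! hTx
  refine (hT (hTx.le.trans hxt)).not_ge ?_
  refine div_le_of_le_mul₀ (abs_nonneg t) ?_ ?_
  · exact Real.sin_nonneg_of_nonneg_of_le_pi hα.1 (by linarith [hα.2, Real.pi_pos])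
  calc infDist (t • e) A ≤ ‖t • e - x‖ := dist_eq_norm (t • e) x ▸ infDist_le_dist_of_mem hxA
    _ ≤ Real.sin α * |t| := by rw [mul_comm]; exact ht.le

end TauAlong

section MuAlong

variable {E : Type*} [NormedAddCommGroup E] [InnerProductSpace ℝ E] {A : Set E} {e u : E} {α : ℝ}

lemma muAlong_nonneg (A : Set E) (e : E) : 0 ≤ muAlong A e := by
  refine Real.sSup_nonneg ?_
  rintro _ ⟨u, -, rfl⟩
  exact abs_nonneg _

lemma muAlong_le_cos (hα : α ∈ Set.Icc 0 (Real.pi / 2))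
    (hb : IsBounded (A ∩ doubleCone e α)) : muAlong A e ≤ Real.cos α := by
  refine Real.sSup_le ?_
    (Real.cos_nonneg_of_mem_Icc ⟨by linarith [hα.1, Real.pi_pos], hα.2⟩)
  rintro _ ⟨u, hu, rfl⟩
  exact hu.abs_inner_le_cos hb

lemma IsClusterDirection.abs_inner_le_muAlong (hu : IsClusterDirection A u) (e : E) :
    |⟪u, e⟫| ≤ muAlong A e := by
  refine le_csSup ⟨‖e‖, ?_⟩ ⟨u, hu, rfl⟩
  rintro _ ⟨v, hv, rfl⟩
  simpa only [hv.norm_eq_one, one_mul] using abs_real_inner_le_norm v e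

lemma isBounded_inter_doubleCone_of_muAlong_lt_cos [ProperSpace E]
    (h : muAlong A e < Real.cos α) : IsBounded (A ∩ doubleCone e α) := by
  by_contra hb
  obtain ⟨u, hu⟩ := exists_isClusterDirection_of_not_isBounded hb
  have hA : IsClusterDirection A u := hu.mono Set.inter_subset_left
  have hD : IsClusterDirection (doubleCone e α) u := hu.mono Set.inter_subset_right
  exact h.not_ge (hD.cos_le_abs_inner.trans (hA.abs_inner_le_muAlong e))

end MuAlong

section PhiDir

variable {E : Type*} [NormedAddCommGroup E] [InnerProductSpace ℝ E] {A : Set E} {e : E}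

lemma zero_mem_boundedConeAngles (A : Set E) (he : ‖e‖ = 1) : 0 ∈ boundedConeAngles A :=
  ⟨⟨le_rfl, Real.pi_div_two_pos.le⟩, e, he, by simp [doubleCone_zero he]⟩

variable [Nontrivial E]

lemma boundedConeAngles_nonempty (A : Set E) : (boundedConeAngles A).Nonempty :=
  let ⟨_, he⟩ := exists_norm_eq E (zero_le_one (α := ℝ))
  ⟨0, zero_mem_boundedConeAngles A he⟩

lemma isLUB_boundedConeAngles (A : Set E) : IsLUB (boundedConeAngles A) (phiDir A) :=
  isLUB_csSup (boundedConeAngles_nonempty A) ⟨Real.pi / 2, fun _ hα => hα.1.2⟩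

lemma phiDir_mem_Icc (A : Set E) : phiDir A ∈ Set.Icc 0 (Real.pi / 2) := by
  obtain ⟨α, hα⟩ := boundedConeAngles_nonempty A
  exact ⟨hα.1.1.trans ((isLUB_boundedConeAngles A).1 hα),
    (isLUB_boundedConeAngles A).2 fun _ hβ => hβ.1.2⟩

lemma isLUB_sin_image_boundedConeAngles (A : Set E) :
    IsLUB (Real.sin '' boundedConeAngles A) (Real.sin (phiDir A)) := by
  refine (isLUB_boundedConeAngles A).isLUB_of_tendsto ?_ (boundedConeAngles_nonempty A)
    Real.continuous_sin.continuousWithinAt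
  exact Real.strictMonoOn_sin.monotoneOn.mono fun α hα =>
    ⟨by linarith [hα.1.1, Real.pi_pos], hα.1.2⟩

lemma isGLB_cos_image_boundedConeAngles (A : Set E) :
    IsGLB (Real.cos '' boundedConeAngles A) (Real.cos (phiDir A)) := by
  refine (isLUB_boundedConeAngles A).isGLB_of_tendsto ?_ (boundedConeAngles_nonempty A)
    Real.continuous_cos.continuousWithinAt
  exact Real.strictAntiOn_cos.antitoneOn.mono fun α hα =>
    ⟨hα.1.1, by linarith [hα.1.2, Real.pi_pos]⟩

lemma tauAlong_le_sin_phiDir (hA : A.Nonempty) (he : ‖e‖ = 1) :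
    tauAlong A e ≤ Real.sin (phiDir A) := by
  refine le_of_forall_lt_imp_le_of_dense fun s hs => ?_
  have sin_nonneg : 0 ≤ Real.sin (phiDir A) :=
    (isLUB_sin_image_boundedConeAngles A).1 ⟨0, zero_mem_boundedConeAngles A he, Real.sin_zero⟩
  rcases le_total s 0 with hs₀ | hs₀
  · exact hs₀.trans sin_nonneg
  have sin_arcsin : Real.sin (Real.arcsin s) = s :=
    Real.sin_arcsin (by linarith) (hs.le.trans (tauAlong_le_one hA he))
  have arcsin_mem : Real.arcsin s ∈ Set.Icc 0 (Real.pi / 2) :=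
    ⟨Real.arcsin_nonneg.2 hs₀, Real.arcsin_le_pi_div_two s⟩
  have hb : IsBounded (A ∩ doubleCone e (Real.arcsin s)) :=
    isBounded_inter_doubleCone_of_sin_lt_tauAlong he arcsin_mem (sin_arcsin.trans_lt hs)
  exact (isLUB_sin_image_boundedConeAngles A).1 ⟨_, ⟨arcsin_mem, e, he, hb⟩, sin_arcsin⟩

lemma cos_phiDir_le_muAlong [ProperSpace E] (A : Set E) (he : ‖e‖ = 1) :
    Real.cos (phiDir A) ≤ muAlong A e := by
  refine le_of_forall_gt_imp_ge_of_dense fun c hc => ?_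
  rcases le_total 1 c with hc₁ | hc₁
  · exact (Real.cos_le_one _).trans hc₁
  have hc₀ : 0 ≤ c := (muAlong_nonneg A e).trans hc.le
  have cos_arccos : Real.cos (Real.arccos c) = c := Real.cos_arccos (by linarith) hc₁
  have arccos_mem : Real.arccos c ∈ Set.Icc 0 (Real.pi / 2) :=
    ⟨Real.arccos_nonneg c, Real.arccos_le_pi_div_two.2 hc₀⟩
  have hb : IsBounded (A ∩ doubleCone e (Real.arccos c)) :=
    isBounded_inter_doubleCone_of_muAlong_lt_cos (hc.trans_eq cos_arccos.symm)
  exact (isGLB_cos_image_boundedConeAngles A).1 ⟨_, ⟨arccos_mem, e, he, hb⟩, cos_arccos⟩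

theorem tauDir_eq_sin_phiDir (hA : A.Nonempty) : tauDir A = Real.sin (phiDir A) := by
  obtain ⟨e₀, he₀⟩ := exists_norm_eq E (zero_le_one (α := ℝ))
  have hlub : IsLUB {s | ∃ e : E, ‖e‖ = 1 ∧ s = tauAlong A e} (Real.sin (phiDir A)) := by
    refine ⟨?_, fun b hb => (isLUB_sin_image_boundedConeAngles A).2 ?_⟩
    · rintro _ ⟨e, he, rfl⟩
      exact tauAlong_le_sin_phiDir hA he
    · rintro _ ⟨α, ⟨-, e, he, hbdd⟩, rfl⟩
      exact (sin_le_tauAlong hA he hbdd).trans (hb ⟨e, he, rfl⟩)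
  exact hlub.csSup_eq ⟨_, e₀, he₀, rfl⟩

theorem muDir_le_cos_phiDir (A : Set E) : muDir A ≤ Real.cos (phiDir A) := by
  refine (isGLB_cos_image_boundedConeAngles A).2 ?_
  rintro _ ⟨α, ⟨hα, e, he, hb⟩, rfl⟩
  have bddBelow : BddBelow {s | ∃ e : E, ‖e‖ = 1 ∧ s = muAlong A e} := by
    refine ⟨0, ?_⟩
    rintro _ ⟨e', -, rfl⟩
    exact muAlong_nonneg A e'
  exact (csInf_le bddBelow ⟨e, he, rfl⟩).trans (muAlong_le_cos hα hb)

theorem muDir_eq_cos_phiDir [ProperSpace E] (A : Set E) : muDir A = Real.cos (phiDir A) := by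
  obtain ⟨e₀, he₀⟩ := exists_norm_eq E (zero_le_one (α := ℝ))
  refine (muDir_le_cos_phiDir A).antisymm (le_csInf ⟨_, e₀, he₀, rfl⟩ ?_)
  rintro _ ⟨e, he, rfl⟩
  exact cos_phiDir_le_muAlong A he

theorem cos_phiDir_eq_sqrt (hA : A.Nonempty) :
    Real.cos (phiDir A) = √(1 - tauDir A ^ 2) := by
  have hφ := phiDir_mem_Icc A
  rw [tauDir_eq_sin_phiDir hA]
  exact Real.cos_eq_sqrt_one_sub_sin_sq (by linarith [hφ.1, Real.pi_pos]) hφ.2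

end PhiDir

theorem tau_phi_mu_general {E : Type*} [NormedAddCommGroup E] [InnerProductSpace ℝ E]
    [Nontrivial E] {A : Set E} (hA : A.Nonempty) :
    tauDir A = Real.sin (phiDir A) ∧ muDir A ≤ Real.cos (phiDir A) ∧
      Real.cos (phiDir A) = √(1 - tauDir A ^ 2) ∧
      (FiniteDimensional ℝ E → muDir A = Real.cos (phiDir A)) := by
  refine ⟨tauDir_eq_sin_phiDir hA, muDir_le_cos_phiDir A, cos_phiDir_eq_sqrt hA, fun _ => ?_⟩
  have : ProperSpace E := FiniteDimensional.proper ℝ E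
  exact muDir_eq_cos_phiDir A

/-- For an unbounded subset `A` of a real Hilbert space `E`, `τ(A) = sin φ(A)` and
`μ(A) ≤ cos φ(A)`; if moreover `E` is finite-dimensional, then
`μ(A) = cos φ(A) = √(1 - τ(A)²)`. -/
theorem tau_phi_mu {E : Type*} [NormedAddCommGroup E] [InnerProductSpace ℝ E]
    [CompleteSpace E] [Nontrivial E] (A : Set E) (hA : ¬ IsBounded A) :
    tauDir A = Real.sin (phiDir A) ∧ muDir A ≤ Real.cos (phiDir A) ∧
      (FiniteDimensional ℝ E →
        muDir A = Real.cos (phiDir A) ∧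
        Real.cos (phiDir A) = Real.sqrt (1 - tauDir A ^ 2)) := by
  obtain ⟨hτ, hμ, hcos, hfin⟩ := tau_phi_mu_general (nonempty_of_not_isBounded hA)
  exact ⟨hτ, hμ, fun h => ⟨hfin h, hcos⟩⟩
end

section
/- Let n ≥ 2, let M ≥ 1, let r = 1/(8√M), and let A_r = {(x,t) ∈ ℝ^{n−1} × ℝ : |t| ≤ r|x|}. Then the restriction of g to A_r is a 1-nearisometry: for all z, z′ ∈ A_r, ||g z′ − g z| − |z′ − z|| ≤ 1. -/
open Filter Metric Bornology

/-- The auxiliary map `g : ℝⁿ = ℝ^{n-1} × ℝ → ℝⁿ`, `g(x,t) = (x, t + √|x|)` for `|x| ≤ M`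
and `g(x,t) = (x, t + √M)` for `|x| ≥ M`.  Here `ℝ^{n-1} × ℝ` carries the euclidean
(`ℓ²`) norm, via `WithLp 2`. -/
noncomputable def gMap {m : ℕ} (M : ℝ) (z : WithLp 2 (EuclideanSpace ℝ (Fin m) × ℝ)) :
    WithLp 2 (EuclideanSpace ℝ (Fin m) × ℝ) :=
  (WithLp.equiv 2 _).symm
    ((WithLp.equiv 2 _ z).1,
      (WithLp.equiv 2 _ z).2 +
        if ‖(WithLp.equiv 2 _ z).1‖ ≤ M then Real.sqrt ‖(WithLp.equiv 2 _ z).1‖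
        else Real.sqrt M)

/-- The set `A_r = {(x,t) : |t| ≤ r |x|}` in `ℝ^{n-1} × ℝ`. -/
def coneSet {m : ℕ} (r : ℝ) : Set (WithLp 2 (EuclideanSpace ℝ (Fin m) × ℝ)) :=
  {z | |(WithLp.equiv 2 _ z).2| ≤ r * ‖(WithLp.equiv 2 _ z).1‖}

/-! The differences `g z' - g z` and `z' - z` share their horizontal part, of norm `d ≥ b - a`,
where `a = |x| ≤ b = |x'|`; their vertical parts are `T + S` and `T`, where `S` is the increment of
`s ↦ √(min s M)` from `a` to `b`. Both differences have norm at least `d`, so these norms differ by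
at most `|(T + S)² - T²| / (2 d) ≤ (2 |T| S + S²) / (2 d)` (and by `0` if `d = 0`, as then `S = 0`).
Here `S² ≤ b - a`, and `(a + b) S ≤ √M (b - a)` compensates for the linear growth
`|T| ≤ r (a + b)` permitted by the cone, which leaves the bound `r √M + 1 / 2`. -/

section Sqrt

variable {M a b : ℝ}

lemma sqrt_sub_sqrt_mul_sqrt_add_sqrt (ha : 0 ≤ a) (hb : 0 ≤ b) :
    (√b - √a) * (√b + √a) = b - a := by
  rw [mul_comm, ← sq_sub_sq, Real.sq_sqrt ha, Real.sq_sqrt hb]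

lemma sq_sqrt_sub_sqrt_le (ha : 0 ≤ a) (hab : a ≤ b) : (√b - √a) ^ 2 ≤ b - a := by
  have hS : 0 ≤ √b - √a := sub_nonneg.2 (Real.sqrt_le_sqrt hab)
  calc (√b - √a) ^ 2 = (√b - √a) * (√b - √a) := sq _
    _ ≤ (√b - √a) * (√b + √a) := by gcongr; linarith [Real.sqrt_nonneg a]
    _ = b - a := sqrt_sub_sqrt_mul_sqrt_add_sqrt ha (ha.trans hab)

lemma le_sqrt_mul_sqrt_of_le (ha : 0 ≤ a) (haM : a ≤ M) : a ≤ √M * √a := by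
  calc a = √a * √a := (Real.mul_self_sqrt ha).symm
    _ ≤ √M * √a := by gcongr

lemma add_mul_sqrt_sub_sqrt_le (ha : 0 ≤ a) (hab : a ≤ b) (hbM : b ≤ M) :
    (a + b) * (√b - √a) ≤ √M * (b - a) := by
  have hS : 0 ≤ √b - √a := sub_nonneg.2 (Real.sqrt_le_sqrt hab)
  have hb : 0 ≤ b := ha.trans hab
  calc (a + b) * (√b - √a) ≤ (√M * √a + √M * √b) * (√b - √a) := by
        gcongr
        · exact le_sqrt_mul_sqrt_of_le ha (hab.trans hbM)
        · exact le_sqrt_mul_sqrt_of_le hb hbM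
    _ = √M * ((√b - √a) * (√b + √a)) := by ring
    _ = √M * (b - a) := by rw [sqrt_sub_sqrt_mul_sqrt_add_sqrt ha hb]

lemma sq_sqrt_min_sub_sqrt_min_le (hM : 0 ≤ M) (ha : 0 ≤ a) (hab : a ≤ b) :
    (√(min b M) - √(min a M)) ^ 2 ≤ b - a := by
  calc (√(min b M) - √(min a M)) ^ 2 ≤ min b M - min a M :=
        sq_sqrt_sub_sqrt_le (le_min ha hM) (min_le_min_right M hab)
    _ ≤ b - a := by grind

lemma add_mul_sqrt_min_sub_sqrt_min_le (ha : 0 ≤ a) (hab : a ≤ b) :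
    (a + b) * (√(min b M) - √(min a M)) ≤ √M * (b - a) := by
  rcases le_total a M with haM | hMa
  · have hS : √(min b M) - √a ≤ √M :=
      (sub_le_self _ (Real.sqrt_nonneg a)).trans (Real.sqrt_le_sqrt (min_le_right b M))
    rw [min_eq_left haM]
    calc (a + b) * (√(min b M) - √a)
        = (a + min b M) * (√(min b M) - √a) + (b - min b M) * (√(min b M) - √a) := by ring
      _ ≤ √M * (min b M - a) + (b - min b M) * √M :=
        add_le_add (add_mul_sqrt_sub_sqrt_le ha (le_min hab haM) (min_le_right b M))
          (mul_le_mul_of_nonneg_left hS (sub_nonneg.2 (min_le_left b M)))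
      _ = √M * (b - a) := by ring
  · rw [min_eq_right hMa, min_eq_right (hMa.trans hab), sub_self, mul_zero]
    exact mul_nonneg (Real.sqrt_nonneg M) (sub_nonneg.2 hab)

end Sqrt

lemma abs_norm_sub_norm_le_of_fst_eq {E F : Type*} [SeminormedAddCommGroup E]
    [SeminormedAddCommGroup F] {u v : WithLp 2 (E × F)} {ε : ℝ} (hε : 0 ≤ ε)
    (hfst : u.fst = v.fst) (hsnd : |‖u.snd‖ ^ 2 - ‖v.snd‖ ^ 2| ≤ 2 * ε * ‖v.fst‖) :
    |‖u‖ - ‖v‖| ≤ ε := by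
  have hu : ‖v.fst‖ ≤ ‖u‖ := hfst ▸ WithLp.norm_fst_le E u
  have hv : ‖v.fst‖ ≤ ‖v‖ := WithLp.norm_fst_le E v
  have hmul : |‖u‖ - ‖v‖| * (‖u‖ + ‖v‖) ≤ ε * (‖u‖ + ‖v‖) := by
    calc |‖u‖ - ‖v‖| * (‖u‖ + ‖v‖) = |‖u‖ ^ 2 - ‖v‖ ^ 2| := by
          rw [sq_sub_sq, abs_mul, abs_of_nonneg (by positivity : 0 ≤ ‖u‖ + ‖v‖), mul_comm]
      _ = |‖u.snd‖ ^ 2 - ‖v.snd‖ ^ 2| := by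
          rw [WithLp.prod_norm_sq_eq_of_L2, WithLp.prod_norm_sq_eq_of_L2, hfst,
            add_sub_add_left_eq_sub]
      _ ≤ ε * (‖v.fst‖ + ‖v.fst‖) := by linarith
      _ ≤ ε * (‖u‖ + ‖v‖) := by gcongr
  rcases (by positivity : 0 ≤ ‖u‖ + ‖v‖).eq_or_lt with hzero | hpos
  · have habs : |‖u‖ - ‖v‖| ≤ ‖u‖ + ‖v‖ := by
      simpa using abs_sub ‖u‖ ‖v‖
    linarith
  · exact le_of_mul_le_mul_right hmul hpos

section Cone

variable {m : ℕ} {M r : ℝ} {z z' : WithLp 2 (EuclideanSpace ℝ (Fin m) × ℝ)}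

lemma gMap_fst : (gMap M z).fst = z.fst := rfl

lemma gMap_snd : (gMap M z).snd = z.snd + √(min ‖z.fst‖ M) := by
  rw [min_def, apply_ite Real.sqrt]
  rfl

lemma mem_coneSet : z ∈ coneSet r ↔ |z.snd| ≤ r * ‖z.fst‖ := Iff.rfl

lemma abs_snd_sub_snd_le_of_mem_coneSet (hz : z ∈ coneSet r) (hz' : z' ∈ coneSet r) :
    |z'.snd - z.snd| ≤ r * (‖z.fst‖ + ‖z'.fst‖) := by
  calc |z'.snd - z.snd| ≤ |z'.snd| + |z.snd| := abs_sub _ _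
    _ ≤ r * ‖z'.fst‖ + r * ‖z.fst‖ := add_le_add (mem_coneSet.1 hz') (mem_coneSet.1 hz)
    _ = r * (‖z.fst‖ + ‖z'.fst‖) := by ring

lemma abs_sq_gMap_snd_sub_sub_sq_snd_sub_le (hM : 0 ≤ M) (hr : 0 ≤ r) (hz : z ∈ coneSet r)
    (hz' : z' ∈ coneSet r) (hle : ‖z.fst‖ ≤ ‖z'.fst‖) :
    |((gMap M z').snd - (gMap M z).snd) ^ 2 - (z'.snd - z.snd) ^ 2| ≤
      (2 * r * √M + 1) * (‖z'.fst‖ - ‖z.fst‖) := by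
  set a := ‖z.fst‖
  set b := ‖z'.fst‖
  set T := z'.snd - z.snd
  set S := √(min b M) - √(min a M)
  have ha : 0 ≤ a := norm_nonneg _
  have hS : 0 ≤ S := sub_nonneg.2 (Real.sqrt_le_sqrt (min_le_min_right M hle))
  have hT : |T| ≤ r * (a + b) := abs_snd_sub_snd_le_of_mem_coneSet hz hz'
  have hg : (gMap M z').snd - (gMap M z).snd = T + S := by
    rw [gMap_snd, gMap_snd]
    ring
  calc |((gMap M z').snd - (gMap M z).snd) ^ 2 - T ^ 2| = |2 * T * S + S ^ 2| := by
        rw [hg]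
        congr 1
        ring
    _ ≤ 2 * |T| * S + S ^ 2 := by
        refine (abs_add_le _ _).trans_eq ?_
        rw [abs_mul, abs_mul, abs_two, abs_of_nonneg hS, abs_of_nonneg (sq_nonneg S)]
    _ ≤ 2 * (r * (a + b)) * S + S ^ 2 := by gcongr
    _ = 2 * r * ((a + b) * S) + S ^ 2 := by ring
    _ ≤ 2 * r * (√M * (b - a)) + (b - a) := by
        have hmulS : (a + b) * S ≤ √M * (b - a) := add_mul_sqrt_min_sub_sqrt_min_le ha hle
        have hsqS : S ^ 2 ≤ b - a := sq_sqrt_min_sub_sqrt_min_le hM ha hle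
        exact add_le_add (mul_le_mul_of_nonneg_left hmulS (by positivity)) hsqS
    _ = (2 * r * √M + 1) * (b - a) := by ring

end Cone

theorem gMap_nearisometry_on_cone_general {m : ℕ} {M r : ℝ} (hM : 0 ≤ M) (hr : 0 ≤ r) :
    ∀ z ∈ coneSet (m := m) r, ∀ z' ∈ coneSet (m := m) r,
      |‖gMap M z' - gMap M z‖ - ‖z' - z‖| ≤ r * √M + 1 / 2 := by
  intro z hz z' hz'
  wlog hle : ‖z.fst‖ ≤ ‖z'.fst‖ generalizing z z'
  · rw [norm_sub_rev (gMap M z'), norm_sub_rev z']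
    exact this z' hz' z hz (le_of_not_ge hle)
  apply abs_norm_sub_norm_le_of_fst_eq (by positivity)
  · simp only [WithLp.sub_fst, gMap_fst]
  simp only [WithLp.sub_fst, WithLp.sub_snd, Real.norm_eq_abs, sq_abs]
  calc |((gMap M z').snd - (gMap M z).snd) ^ 2 - (z'.snd - z.snd) ^ 2|
      ≤ (2 * r * √M + 1) * (‖z'.fst‖ - ‖z.fst‖) :=
        abs_sq_gMap_snd_sub_sub_sq_snd_sub_le hM hr hz hz' hle
    _ ≤ (2 * r * √M + 1) * ‖z'.fst - z.fst‖ := by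
        gcongr
        exact norm_sub_norm_le z'.fst z.fst
    _ = 2 * (r * √M + 1 / 2) * ‖z'.fst - z.fst‖ := by ring

/-- Lemma 3.5: with `M ≥ 1` and `r = 1/(8√M)`, the restriction of `g` to `A_r` is a
`1`-nearisometry. -/
theorem gMap_nearisometry_on_cone {n : ℕ} (hn : 2 ≤ n) (M : ℝ) (hM : 1 ≤ M)
    (r : ℝ) (hr : r = 1 / (8 * Real.sqrt M)) :
    ∀ z ∈ coneSet (m := n - 1) r, ∀ z' ∈ coneSet (m := n - 1) r,
      |‖gMap M z' - gMap M z‖ - ‖z' - z‖| ≤ 1 := by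
  have hrM : r * √M = 1 / 8 := by rw [hr]; field_simp
  exact fun z hz z' hz' ↦ (gMap_nearisometry_on_cone_general (by linarith) (by rw [hr]; positivity)
    z hz z' hz').trans (by rw [hrM]; norm_num)
end

section
/- Let E and F be real Hilbert spaces, let c′ > 0, let A ⊆ E be an unbounded set with 0 ∈ A and μ(A) ≥ 1/c′, and let f : A → F be an ε-nearisometry for some ε ≥ 0 with f 0 = 0. Then there is a continuous linear map S : F → E with operator norm ‖S‖ = 1 such that |S(f x) − x| ≤ 2c′ε for all x ∈ A. -/
open Filter Metric Bornology RealInnerProductSpace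

/-- The orthogonal projection of `F` onto the (closed) range `U(E)` of a linear isometry
`U : E →ₗᵢ[ℝ] F` from a complete space, as a map `F → F`. -/
noncomputable def projOntoRange {E F : Type*} [NormedAddCommGroup E] [NormedSpace ℝ E]
    [CompleteSpace E] [NormedAddCommGroup F] [InnerProductSpace ℝ F]
    (U : E →ₗᵢ[ℝ] F) (v : F) : F :=
  haveI : CompleteSpace (⊤ : Submodule ℝ E) :=
    completeSpace_coe_iff_isComplete.2 (by simpa using completeSpace_iff_isComplete_univ.1 ‹_›)
  haveI : CompleteSpace (Submodule.map U.toLinearMap ⊤) := U.completeSpace_map ⊤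
  (Submodule.orthogonalProjectionOnto (Submodule.map U.toLinearMap ⊤) v : F)

/-!
Far out along a cluster direction `u` of `A`, the vectors `f x / ‖x‖` converge to some `v`, and
polarization shows that `u ↦ v` preserves inner products and that `⟪f z, v⟫` differs from `⟪z, u⟫`
by at most `2 * ε`. Since `μ(A) > 0`, the cluster directions span a dense subspace, so `u ↦ v`
extends to a linear isometry `U` into the completion of `F`. Its adjoint restricts to the required
`S : F → E`: the vector `S (f z) - z` has inner product at most `2 * ε` with every cluster
direction, hence norm at most `2 * ε / μ(A)`.
-/

open UniformSpace (Completion)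

section InnerProductSpaces

variable {𝕜 E F ι : Type*} [RCLike 𝕜] [NormedAddCommGroup E] [InnerProductSpace 𝕜 E]
  [NormedAddCommGroup F] [InnerProductSpace 𝕜 F]

open scoped InnerProductSpace

theorem norm_linearCombination_eq_of_inner_eq {a : ι → E} {b : ι → F}
    (h : ∀ i j, ⟪b i, b j⟫_𝕜 = ⟪a i, a j⟫_𝕜) (g : ι →₀ 𝕜) :
    ‖Finsupp.linearCombination 𝕜 b g‖ = ‖Finsupp.linearCombination 𝕜 a g‖ := by
  simp only [norm_eq_sqrt_re_inner (𝕜 := 𝕜), Finsupp.linearCombination_apply, Finsupp.sum,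
    sum_inner, inner_sum, inner_smul_left, inner_smul_right, h]

theorem exists_linearIsometry_of_inner_eq [CompleteSpace F] {a : ι → E} {b : ι → F}
    (ha : Dense (Submodule.span 𝕜 (Set.range a) : Set E))
    (h : ∀ i j, ⟪b i, b j⟫_𝕜 = ⟪a i, a j⟫_𝕜) :
    ∃ U : E →ₗᵢ[𝕜] F, ∀ i, U (a i) = b i := by
  let combA := Finsupp.linearCombination 𝕜 a
  let combB := Finsupp.linearCombination 𝕜 b
  have hdense : DenseRange combA := by
    rwa [DenseRange, ← LinearMap.coe_range, Finsupp.range_linearCombination]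
  have hnorm : ∀ g, ‖combB g‖ = ‖combA g‖ := norm_linearCombination_eq_of_inner_eq h
  let T : E →L[𝕜] F := combB.extendOfNorm combA
  have hT : ∀ g, T (combA g) = combB g :=
    LinearMap.extendOfNorm_eq hdense ⟨1, fun g => by rw [one_mul, hnorm]⟩
  have hT_norm : ∀ y, ‖T y‖ = ‖y‖ := fun y =>
    hdense.induction_on y (isClosed_eq (by fun_prop) (by fun_prop)) fun g => by rw [hT, hnorm]
  exact ⟨⟨T.toLinearMap, hT_norm⟩, fun i => by
    simpa [combA, combB] using hT (Finsupp.single i 1)⟩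

theorem cauchy_map_of_tendsto_inner_sub_inner {l : Filter ι} {a : ι → E} {b : ι → F}
    (ha : Cauchy (map a l))
    (h : Tendsto (fun p : ι × ι => RCLike.re ⟪b p.1, b p.2⟫_𝕜 - RCLike.re ⟪a p.1, a p.2⟫_𝕜)
      (l ×ˢ l) (nhds 0)) :
    Cauchy (map b l) := by
  simp only [cauchy_map_iff, tendsto_uniformity_iff_dist_tendsto_zero, dist_eq_norm] at ha ⊢
  refine ⟨ha.1, ?_⟩
  have hfst := h.comp ((tendsto_fst (g := l)).prodMk tendsto_fst)
  have hsnd := h.comp ((tendsto_snd (f := l)).prodMk tendsto_snd)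
  have hsq : Tendsto (fun p : ι × ι => ‖b p.1 - b p.2‖ ^ 2) (l ×ˢ l) (nhds 0) := by
    have hsum := ((hfst.sub (h.const_mul 2)).add hsnd).add (ha.2.pow 2)
    simp only [mul_zero, sub_zero, add_zero, zero_pow two_ne_zero] at hsum
    refine hsum.congr fun p => ?_
    simp only [Function.comp_apply, norm_sub_sq (𝕜 := 𝕜), inner_self_eq_norm_sq]
    ring
  simpa [Real.sqrt_sq (norm_nonneg _)] using hsq.sqrt

end InnerProductSpaces

theorem opNorm_comp_toComplL {𝕜 F G : Type*} [NontriviallyNormedField 𝕜]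
    [NormedAddCommGroup F] [NormedSpace 𝕜 F] [NormedAddCommGroup G] [NormedSpace 𝕜 G]
    (T : Completion F →L[𝕜] G) :
    ‖T ∘L Completion.toComplL‖ = ‖T‖ := by
  apply le_antisymm
  · refine ContinuousLinearMap.opNorm_le_bound _ (norm_nonneg T) fun y => ?_
    simpa using T.le_opNorm (y : Completion F)
  · refine T.opNorm_le_bound (norm_nonneg _) fun y => ?_
    induction y using Completion.induction_on with
    | hp => exact isClosed_le (by fun_prop) (by fun_prop)
    | ih y => simpa using (T ∘L Completion.toComplL).le_opNorm y

section MuDir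

variable {E : Type*} [NormedAddCommGroup E] [InnerProductSpace ℝ E] {A : Set E}

theorem muDir_le_of_forall_abs_inner_le {e : E} (he : ‖e‖ = 1) {b : ℝ} (hb : 0 ≤ b)
    (h : ∀ u, IsClusterDirection A u → |⟪u, e⟫| ≤ b) : muDir A ≤ b := by
  have hbdd : BddBelow {s | ∃ e : E, ‖e‖ = 1 ∧
      s = sSup {t | ∃ u, IsClusterDirection A u ∧ t = |⟪u, e⟫|}} := by
    refine ⟨0, ?_⟩
    rintro _ ⟨e, -, rfl⟩
    refine Real.sSup_nonneg ?_
    rintro _ ⟨u, -, rfl⟩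
    exact abs_nonneg _
  refine (csInf_le hbdd ⟨e, he, rfl⟩).trans (Real.sSup_le ?_ hb)
  rintro _ ⟨u, hu, rfl⟩
  exact h u hu

theorem norm_mul_muDir_le_of_forall_abs_inner_le {w : E} {b : ℝ} (hb : 0 ≤ b)
    (h : ∀ u, IsClusterDirection A u → |⟪u, w⟫| ≤ b) : ‖w‖ * muDir A ≤ b := by
  rcases eq_or_ne w 0 with rfl | hw
  · simpa using hb
  have hw_pos : 0 < ‖w‖ := norm_pos_iff.mpr hw
  suffices muDir A ≤ b / ‖w‖ by rwa [mul_comm, ← le_div_iff₀ hw_pos]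
  refine muDir_le_of_forall_abs_inner_le (norm_smul_inv_norm (𝕜 := ℝ) hw) (by positivity)
    fun u hu => ?_
  rw [real_inner_smul_right, abs_mul, RCLike.ofReal_real_eq_id, id, abs_inv, abs_norm,
    inv_mul_eq_div]
  gcongr
  exact h u hu

theorem dense_span_isClusterDirection [CompleteSpace E] (hA : 0 < muDir A) :
    Dense (Submodule.span ℝ {u | IsClusterDirection A u} : Set E) := by
  rw [Submodule.dense_iff_topologicalClosure_eq_top, Submodule.topologicalClosure_eq_top_iff,
    Submodule.eq_bot_iff]
  intro w hw
  have hw_inner : ∀ u, IsClusterDirection A u → |⟪u, w⟫| ≤ 0 := fun u hu => by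
    have huw : ⟪u, w⟫ = 0 :=
      (Submodule.mem_orthogonal _ w).mp hw u (Submodule.subset_span hu)
    rw [huw, abs_zero]
  have hw_norm := norm_mul_muDir_le_of_forall_abs_inner_le le_rfl hw_inner
  exact norm_le_zero_iff.mp (nonpos_of_mul_nonpos_left hw_norm hA)

theorem nontrivial_of_muDir_pos (hA : 0 < muDir A) : Nontrivial E := by
  by_contra hE
  rw [not_nontrivial_iff_subsingleton] at hE
  exact hA.ne' (by simp [muDir, Subsingleton.elim _ (0 : E)])

end MuDir

theorem abs_sq_sub_sq_le {R : Type*} [CommRing R] [LinearOrder R] [IsStrictOrderedRing R]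
    {a b e : R} (h : |a - b| ≤ e) : |a ^ 2 - b ^ 2| ≤ e * (2 * |b| + e) := by
  have hsum : |a + b| ≤ 2 * |b| + e :=
    calc |a + b| = |2 * b + (a - b)| := by ring_nf
      _ ≤ |2 * b| + |a - b| := abs_add_le _ _
      _ ≤ 2 * |b| + e := by rw [abs_mul, abs_two]; gcongr
  rw [sq_sub_sq, abs_mul, mul_comm]
  gcongr
  exact (abs_nonneg _).trans h

/-- `v` is an image of the direction `u` under `f` at infinity: `u` is a cluster direction of `A`,
and along some sequence witnessing this, `f x / ‖x‖` converges to `v`. For a nearisometry `f` this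
agrees with `f x / ‖f x‖`, but dividing by `‖x‖` keeps the estimates linear in `f x`. -/
def IsDirectionImage {E F : Type*} [NormedAddCommGroup E] [NormedSpace ℝ E]
    [NormedAddCommGroup F] [NormedSpace ℝ F] (f : E → F) (A : Set E) (u : E) (v : F) : Prop :=
  ∃ x : ℕ → E, (∀ j, x j ∈ A) ∧ Tendsto (fun j => ‖x j‖) atTop atTop ∧
    Tendsto (fun j => ‖x j‖⁻¹ • x j) atTop (nhds u) ∧
    Tendsto (fun j => ‖x j‖⁻¹ • f (x j)) atTop (nhds v)

namespace IsNearisometryOn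

section Normed

variable {E F : Type*} [NormedAddCommGroup E] [NormedAddCommGroup F]
  {A : Set E} {f : E → F} {ε : ℝ}

theorem nonneg (hf : IsNearisometryOn f A ε) (hA : A.Nonempty) : 0 ≤ ε :=
  let ⟨x, hx⟩ := hA
  (abs_nonneg _).trans (hf x hx x hx)

theorem abs_norm_sub_norm_le (hf : IsNearisometryOn f A ε) (h0A : 0 ∈ A) (hf0 : f 0 = 0)
    {x : E} (hx : x ∈ A) : |‖f x‖ - ‖x‖| ≤ ε := by
  simpa [hf0] using hf x hx 0 h0A

theorem coe_completion (hf : IsNearisometryOn f A ε) :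
    IsNearisometryOn (fun x => (f x : Completion F)) A ε := fun x hx y hy => by
  simpa only [← Completion.coe_sub, Completion.norm_coe] using hf x hx y hy

end Normed

variable {E F : Type*} [NormedAddCommGroup E] [InnerProductSpace ℝ E]
  [NormedAddCommGroup F] [InnerProductSpace ℝ F] {A : Set E} {f : E → F} {ε : ℝ}

theorem abs_inner_sub_inner_le (hf : IsNearisometryOn f A ε) (h0A : 0 ∈ A) (hf0 : f 0 = 0)
    {x y : E} (hx : x ∈ A) (hy : y ∈ A) :
    |⟪f x, f y⟫ - ⟪x, y⟫| ≤ 2 * ε * (‖x‖ + ‖y‖ + ε) := by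
  have hε : 0 ≤ ε := hf.nonneg ⟨0, h0A⟩
  have hx_sq := abs_sq_sub_sq_le (hf.abs_norm_sub_norm_le h0A hf0 hx)
  have hy_sq := abs_sq_sub_sq_le (hf.abs_norm_sub_norm_le h0A hf0 hy)
  have hxy_sq := abs_sq_sub_sq_le (hf x hx y hy)
  rw [abs_norm] at hx_sq hy_sq hxy_sq
  have hpolar : 2 * (⟪f x, f y⟫ - ⟪x, y⟫) = (‖f x‖ ^ 2 - ‖x‖ ^ 2) + (‖f y‖ ^ 2 - ‖y‖ ^ 2)
      - (‖f x - f y‖ ^ 2 - ‖x - y‖ ^ 2) := by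
    rw [norm_sub_sq_real, norm_sub_sq_real]
    ring
  have htwice : 2 * |⟪f x, f y⟫ - ⟪x, y⟫| ≤ 2 * (2 * ε * (‖x‖ + ‖y‖ + ε)) :=
    calc 2 * |⟪f x, f y⟫ - ⟪x, y⟫|
        = |2 * (⟪f x, f y⟫ - ⟪x, y⟫)| := by rw [abs_mul, abs_two]
      _ ≤ |‖f x‖ ^ 2 - ‖x‖ ^ 2| + |‖f y‖ ^ 2 - ‖y‖ ^ 2| + |‖f x - f y‖ ^ 2 - ‖x - y‖ ^ 2| := by
          rw [hpolar]
          exact (abs_sub _ _).trans (by gcongr; exact abs_add_le _ _)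
      _ ≤ ε * (2 * ‖x‖ + ε) + ε * (2 * ‖y‖ + ε) + ε * (2 * ‖x - y‖ + ε) := by gcongr
      _ ≤ ε * (2 * ‖x‖ + ε) + ε * (2 * ‖y‖ + ε) + ε * (2 * (‖x‖ + ‖y‖) + ε) := by
          gcongr
          exact norm_sub_le x y
      _ ≤ 2 * (2 * ε * (‖x‖ + ‖y‖ + ε)) := by nlinarith [sq_nonneg ε]
  linarith

theorem tendsto_inner_sub_inner_normalized (hf : IsNearisometryOn f A ε) (h0A : 0 ∈ A)
    (hf0 : f 0 = 0) {ι : Type*} {l : Filter ι} {x y : ι → E}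
    (hxA : ∀ j, x j ∈ A) (hyA : ∀ j, y j ∈ A)
    (hx : Tendsto (fun j => ‖x j‖) l atTop) (hy : Tendsto (fun j => ‖y j‖) l atTop) :
    Tendsto (fun j => ⟪‖x j‖⁻¹ • f (x j), ‖y j‖⁻¹ • f (y j)⟫ - ⟪‖x j‖⁻¹ • x j, ‖y j‖⁻¹ • y j⟫)
      l (nhds 0) := by
  have hx_inv := hx.inv_tendsto_atTop
  have hy_inv := hy.inv_tendsto_atTop
  have hbound : Tendsto (fun j => 2 * ε * (‖y j‖⁻¹ + ‖x j‖⁻¹ + ε * (‖x j‖⁻¹ * ‖y j‖⁻¹)))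
      l (nhds 0) := by
    simpa using ((hy_inv.add hx_inv).add ((hx_inv.mul hy_inv).const_mul ε)).const_mul (2 * ε)
  refine squeeze_zero_norm' ?_ hbound
  filter_upwards [hx.eventually_gt_atTop 0, hy.eventually_gt_atTop 0] with j hxj hyj
  calc ‖⟪‖x j‖⁻¹ • f (x j), ‖y j‖⁻¹ • f (y j)⟫ - ⟪‖x j‖⁻¹ • x j, ‖y j‖⁻¹ • y j⟫‖
      = ‖(‖x j‖⁻¹ * ‖y j‖⁻¹) * (⟪f (x j), f (y j)⟫ - ⟪x j, y j⟫)‖ := by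
        simp only [real_inner_smul_left, real_inner_smul_right]
        ring_nf
    _ = ‖x j‖⁻¹ * ‖y j‖⁻¹ * |⟪f (x j), f (y j)⟫ - ⟪x j, y j⟫| := by
        simp only [norm_mul, norm_inv, norm_norm, ← Real.norm_eq_abs]
    _ ≤ ‖x j‖⁻¹ * ‖y j‖⁻¹ * (2 * ε * (‖x j‖ + ‖y j‖ + ε)) := by
        gcongr
        exact hf.abs_inner_sub_inner_le h0A hf0 (hxA j) (hyA j)
    _ = 2 * ε * (‖y j‖⁻¹ + ‖x j‖⁻¹ + ε * (‖x j‖⁻¹ * ‖y j‖⁻¹)) := by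
        field_simp

theorem exists_isDirectionImage [CompleteSpace F] (hf : IsNearisometryOn f A ε) (h0A : 0 ∈ A)
    (hf0 : f 0 = 0) {u : E} (hu : IsClusterDirection A u) : ∃ v, IsDirectionImage f A u v := by
  obtain ⟨x, hxA, hx, hxu⟩ := hu
  have hcauchy : Cauchy (map (fun j => ‖x j‖⁻¹ • f (x j)) atTop) :=
    cauchy_map_of_tendsto_inner_sub_inner (𝕜 := ℝ) hxu.cauchy_map
      (hf.tendsto_inner_sub_inner_normalized h0A hf0 (fun p : ℕ × ℕ => hxA p.1)
        (fun p => hxA p.2) (hx.comp tendsto_fst) (hx.comp tendsto_snd))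
  obtain ⟨v, hv⟩ := cauchy_map_iff_exists_tendsto.mp hcauchy
  exact ⟨v, x, hxA, hx, hxu, hv⟩

theorem inner_eq_of_isDirectionImage (hf : IsNearisometryOn f A ε) (h0A : 0 ∈ A)
    (hf0 : f 0 = 0) {u u' : E} {v v' : F} (hv : IsDirectionImage f A u v)
    (hv' : IsDirectionImage f A u' v') : ⟪v, v'⟫ = ⟪u, u'⟫ := by
  obtain ⟨x, hxA, hx, hxu, hxv⟩ := hv
  obtain ⟨y, hyA, hy, hyu, hyv⟩ := hv'
  have hzero := hf.tendsto_inner_sub_inner_normalized h0A hf0 hxA hyA hx hy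
  have hlim := (hxv.inner hyv (𝕜 := ℝ)).sub (hxu.inner hyu (𝕜 := ℝ))
  exact sub_eq_zero.mp (tendsto_nhds_unique hlim hzero)

theorem abs_inner_sub_inner_le_of_isDirectionImage (hf : IsNearisometryOn f A ε) (h0A : 0 ∈ A)
    (hf0 : f 0 = 0) {u : E} {v : F} (hv : IsDirectionImage f A u v) {z : E} (hz : z ∈ A) :
    |⟪f z, v⟫ - ⟪z, u⟫| ≤ 2 * ε := by
  obtain ⟨x, hxA, hx, hxu, hxv⟩ := hv
  have hlim := (((tendsto_const_nhds (x := f z)).inner hxv (𝕜 := ℝ)).sub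
    ((tendsto_const_nhds (x := z)).inner hxu (𝕜 := ℝ))).abs
  have hbound : Tendsto (fun j => 2 * ε * (1 + ‖x j‖⁻¹ * (‖z‖ + ε))) atTop (nhds (2 * ε)) := by
    simpa using ((hx.inv_tendsto_atTop.mul_const (‖z‖ + ε)).const_add 1).const_mul (2 * ε)
  refine le_of_tendsto_of_tendsto hlim hbound ?_
  filter_upwards [hx.eventually_gt_atTop 0] with j hxj
  calc |⟪f z, ‖x j‖⁻¹ • f (x j)⟫ - ⟪z, ‖x j‖⁻¹ • x j⟫|
      = ‖x j‖⁻¹ * |⟪f z, f (x j)⟫ - ⟪z, x j⟫| := by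
        rw [real_inner_smul_right, real_inner_smul_right, ← mul_sub, abs_mul, abs_inv, abs_norm]
    _ ≤ ‖x j‖⁻¹ * (2 * ε * (‖z‖ + ‖x j‖ + ε)) := by
        gcongr
        exact hf.abs_inner_sub_inner_le h0A hf0 hz (hxA j)
    _ = 2 * ε * (1 + ‖x j‖⁻¹ * (‖z‖ + ε)) := by
        field_simp
        ring

theorem exists_linearIsometry_abs_inner_sub_inner_le [CompleteSpace E] [CompleteSpace F]
    (hf : IsNearisometryOn f A ε) (h0A : 0 ∈ A) (hf0 : f 0 = 0) (hA : 0 < muDir A) :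
    ∃ U : E →ₗᵢ[ℝ] F, ∀ u, IsClusterDirection A u → ∀ z ∈ A, |⟪f z, U u⟫ - ⟪z, u⟫| ≤ 2 * ε := by
  choose φ hφ using fun u : {u // IsClusterDirection A u} =>
    hf.exists_isDirectionImage h0A hf0 u.2
  have hdense : Dense (Submodule.span ℝ (Set.range
      ((↑) : {u // IsClusterDirection A u} → E)) : Set E) := by
    rw [Subtype.range_coe_subtype]
    exact dense_span_isClusterDirection hA
  obtain ⟨U, hU⟩ := exists_linearIsometry_of_inner_eq hdense fun u u' =>
    hf.inner_eq_of_isDirectionImage h0A hf0 (hφ u) (hφ u')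
  refine ⟨U, fun u hu z hz => ?_⟩
  rw [hU ⟨u, hu⟩]
  exact hf.abs_inner_sub_inner_le_of_isDirectionImage h0A hf0 (hφ ⟨u, hu⟩) hz

end IsNearisometryOn

theorem exists_linear_retraction_approx_general {E F : Type*}
    [NormedAddCommGroup E] [InnerProductSpace ℝ E] [CompleteSpace E]
    [NormedAddCommGroup F] [InnerProductSpace ℝ F]
    {c' : ℝ} (hc' : 0 < c') {A : Set E} (h0A : (0 : E) ∈ A) (hmu : 1 / c' ≤ muDir A)
    {f : E → F} {ε : ℝ} (hf : IsNearisometryOn f A ε) (hf0 : f 0 = 0) :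
    ∃ S : F →L[ℝ] E, ‖S‖ = 1 ∧ ∀ x ∈ A, ‖S (f x) - x‖ ≤ 2 * c' * ε := by
  have hA : 0 < muDir A := (one_div_pos.mpr hc').trans_le hmu
  have hε : 0 ≤ ε := hf.nonneg ⟨0, h0A⟩
  have := nontrivial_of_muDir_pos hA
  obtain ⟨U, hU⟩ := hf.coe_completion.exists_linearIsometry_abs_inner_sub_inner_le h0A
    (by rw [hf0, Completion.coe_zero]) hA
  let T := ContinuousLinearMap.adjoint U.toContinuousLinearMap
  refine ⟨T ∘L Completion.toComplL, ?_, fun x hx => ?_⟩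
  · rw [opNorm_comp_toComplL, LinearIsometryEquiv.norm_map, U.norm_toContinuousLinearMap]
  · have hinner : ∀ u, IsClusterDirection A u → |⟪u, T (f x) - x⟫| ≤ 2 * ε := fun u hu => by
      rw [real_inner_comm, inner_sub_left, ContinuousLinearMap.adjoint_inner_left]
      exact hU u hu x hx
    calc ‖T (f x) - x‖ = c' * (‖T (f x) - x‖ * (1 / c')) := by field_simp
      _ ≤ c' * (‖T (f x) - x‖ * muDir A) := by gcongr
      _ ≤ c' * (2 * ε) := by
          refine mul_le_mul_of_nonneg_left ?_ hc'.le
          exact norm_mul_muDir_le_of_forall_abs_inner_le (by positivity) hinner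
      _ = 2 * c' * ε := by ring

/-- Corollary 4.8: if `A ⊆ E` is unbounded with `0 ∈ A` and `μ(A) ≥ 1/c'`, and `f : A → F`
is an `ε`-nearisometry with `f 0 = 0`, then there is a continuous linear map `S : F → E`
with `‖S‖ = 1` and `|S (f x) - x| ≤ 2 c' ε` for all `x ∈ A`. -/
theorem exists_linear_retraction_approx {E F : Type*}
    [NormedAddCommGroup E] [InnerProductSpace ℝ E] [CompleteSpace E]
    [NormedAddCommGroup F] [InnerProductSpace ℝ F] [CompleteSpace F]
    (c' : ℝ) (hc' : 0 < c') (A : Set E) (hA : ¬ IsBounded A) (h0A : (0 : E) ∈ A)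
    (hmu : 1 / c' ≤ muDir A)
    (f : E → F) (ε : ℝ) (hε : 0 ≤ ε) (hf : IsNearisometryOn f A ε) (hf0 : f 0 = 0) :
    ∃ S : F →L[ℝ] E, ‖S‖ = 1 ∧ ∀ x ∈ A, ‖S (f x) - x‖ ≤ 2 * c' * ε :=
  exists_linear_retraction_approx_general hc' h0A hmu hf hf0
end
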